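/- arXiv:1211.0510 — 2 statements merged into one kernel-verified Lean document; each statement's English description precedes it below -/
import Mathlib

section
/- Let μ ∈ ℝ, σ > 0 and κ > 0. Then the tail of the GEV distribution of Fréchet type decays as a power law: x^{1/κ} · (1 − F_G(x; μ, σ, κ)) tends to (σ/κ)^{1/κ} as x → +∞. -/
open Real Filter Topology

/-- The Generalized Extreme Value (GEV) cumulative distribution function with
location `μ`, scale `σ` and shape `κ`, extended by `0` below and by `1` above the
interval where `1 + κ (x - μ) / σ > 0`. -/
noncomputable def gevCDF (μ σ κ x : ℝ) : ℝ :=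
  if κ = 0 then Real.exp (-Real.exp (-(x - μ) / σ))
  else if 0 < 1 + κ * (x - μ) / σ then
    Real.exp (-(1 + κ * (x - μ) / σ) ^ (-1 / κ))
  else if κ < 0 then 1 else 0

/-- For the Fréchet (type 2) case `κ > 0`, the tail of the GEV distribution decays
as a power law: `x ^ (1/κ) * (1 - F_G(x; μ, σ, κ)) → (σ/κ) ^ (1/κ)` as `x → +∞`. -/
theorem gev_frechet_power_law_tail (μ σ κ : ℝ) (hσ : 0 < σ) (hκ : 0 < κ) :
    Tendsto (fun x : ℝ => x ^ (1 / κ) * (1 - gevCDF μ σ κ x)) atTop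
      (𝓝 ((σ / κ) ^ (1 / κ))) := by
  have hu : Tendsto (fun x : ℝ => 1 + κ * (x - μ) / σ) atTop atTop := by
    apply tendsto_atTop_add_const_left
    apply Tendsto.atTop_div_const hσ
    apply Tendsto.const_mul_atTop hκ
    simpa [sub_eq_add_neg] using tendsto_atTop_add_const_right atTop (-μ) tendsto_id
  have hk' : 0 < 1 / κ := by positivity
  have ht : Tendsto (fun x : ℝ => (1 + κ * (x - μ) / σ) ^ (-1 / κ)) atTop (𝓝 0) := by
    have h := (tendsto_rpow_neg_atTop hk').comp hu
    rw [neg_div]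
    exact h
  have hratio : Tendsto (fun x : ℝ => x / (1 + κ * (x - μ) / σ)) atTop (𝓝 (σ / κ)) := by
    have h1 : Tendsto (fun x : ℝ => (1 - κ * μ / σ) * x⁻¹ + κ / σ) atTop (𝓝 (κ / σ)) := by
      simpa using (tendsto_inv_atTop_zero.const_mul (1 - κ * μ / σ)).add_const (κ / σ)
    have h2 := h1.inv₀ (by positivity)
    rw [inv_div] at h2
    refine h2.congr' ?_
    filter_upwards [eventually_gt_atTop 0] with x hx
    rw [← inv_div]
    congr 1
    field_simp
    ring
  have hpow := hratio.rpow_const (p := 1 / κ) (Or.inr hk'.le)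
  have hd : Tendsto (fun t : ℝ => (1 - Real.exp (-t)) / t) (𝓝[≠] 0) (𝓝 1) := by
    have h : HasDerivAt (fun t : ℝ => 1 - Real.exp (-t)) 1 0 := by
      have := ((hasDerivAt_id (0 : ℝ)).neg.exp).const_sub 1
      simpa using this
    have h' := h.tendsto_slope
    refine h'.congr fun t => ?_
    simp [slope_def_field]
  have hne : Tendsto (fun x : ℝ => (1 + κ * (x - μ) / σ) ^ (-1 / κ)) atTop (𝓝[≠] 0) := by
    refine tendsto_nhdsWithin_iff.2 ⟨ht, ?_⟩
    filter_upwards [hu.eventually_gt_atTop 0] with x hx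
    exact (Real.rpow_pos_of_pos hx _).ne'
  have hfin := hpow.mul (hd.comp hne)
  rw [mul_one] at hfin
  refine hfin.congr' ?_
  filter_upwards [hu.eventually_gt_atTop 0, eventually_gt_atTop 0] with x hx hx0
  have hp := Real.rpow_pos_of_pos hx (1 / κ)
  simp only [gevCDF, hκ.ne', if_false, hx, if_true, Function.comp]
  rw [Real.div_rpow hx0.le hx.le, neg_div, Real.rpow_neg hx.le]
  generalize (1 + κ * (x - μ) / σ) ^ (1 / κ) = w at hp ⊢
  rw [div_inv_eq_mul]
  field_simp
end

section
/- Let μ ∈ ℝ and σ > 0. The mean of the Gumbel distribution equals μ + σ·γ, where γ is the Euler–Mascheroni constant: ∫_ℝ x·g(x) dx = μ + σ·γ. In particular the mean differs from the mode μ. -/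
open Real MeasureTheory

lemma integral_log_mul_exp_neg :
    ∫ t in Set.Ioi (0:ℝ), Real.log t * Real.exp (-t) = -Real.eulerMascheroniConstant := by
  have h1 := Complex.hasDerivAt_GammaIntegral (s := 1) (by simp)
  have h2 : HasDerivAt Complex.GammaIntegral (-(Real.eulerMascheroniConstant : ℂ)) 1 := by
    refine Complex.hasDerivAt_Gamma_one.congr_of_eventuallyEq ?_
    have ho : IsOpen {s : ℂ | 0 < s.re} := Complex.continuous_re.isOpen_preimage _ isOpen_Ioi
    filter_upwards [ho.mem_nhds (show (1:ℂ) ∈ {s : ℂ | 0 < s.re} by simp)] with a ha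
    exact (Complex.Gamma_eq_integral ha).symm
  have h3 := h1.unique h2
  simp only [sub_self, Complex.cpow_zero, one_mul] at h3
  have h4 : ((∫ t in Set.Ioi (0:ℝ), Real.log t * Real.exp (-t) : ℝ) : ℂ)
      = ((-Real.eulerMascheroniConstant : ℝ) : ℂ) := by
    rw [← integral_complex_ofReal]
    push_cast at h3 ⊢
    exact h3
  exact_mod_cast h4

lemma euler_pos : 0 < Real.eulerMascheroniConstant := by
  linarith [Real.one_half_lt_eulerMascheroniConstant]

lemma integrable_log_mul_exp_neg :
    IntegrableOn (fun t : ℝ => Real.log t * Real.exp (-t)) (Set.Ioi 0) := by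
  by_contra h
  have h1 := integral_undef h
  rw [integral_log_mul_exp_neg] at h1
  linarith [euler_pos]

/-- The mean of the Gumbel distribution with location `μ` and scale `σ` equals
`μ + σ γ`, where `γ` is the Euler–Mascheroni constant:
`∫ x, x · g(x) dx = μ + σ γ` for the Gumbel density
`g(x) = (1/σ) exp(-(x-μ)/σ) exp(-exp(-(x-μ)/σ))`.
In particular the mean differs from the mode `μ`. -/
theorem gumbel_mean (μ σ : ℝ) (hσ : 0 < σ) :
    (∫ x : ℝ, x * ((1 / σ) * Real.exp (-(x - μ) / σ) *
        Real.exp (-Real.exp (-(x - μ) / σ)))) =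
      μ + σ * Real.eulerMascheroniConstant ∧
    μ + σ * Real.eulerMascheroniConstant ≠ μ := by
  refine ⟨?_, ?_⟩
  · have him : (fun x : ℝ => Real.exp (-(x - μ) / σ)) '' Set.univ = Set.Ioi 0 := by
      ext y
      simp only [Set.image_univ, Set.mem_range, Set.mem_Ioi]
      constructor
      · rintro ⟨x, rfl⟩
        exact Real.exp_pos _
      · intro hy
        refine ⟨μ - σ * Real.log y, ?_⟩
        have : -(μ - σ * Real.log y - μ) / σ = Real.log y := by
          field_simp
          ring
        rw [this, Real.exp_log hy]
    have hder : ∀ x ∈ (Set.univ : Set ℝ), HasDerivWithinAt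
        (fun x : ℝ => Real.exp (-(x - μ) / σ))
        (Real.exp (-(x - μ) / σ) * (-1 / σ)) Set.univ x := by
      intro x _
      exact ((((hasDerivAt_id x).sub_const μ).neg.div_const σ).exp).hasDerivWithinAt
    have hinj : Set.InjOn (fun x : ℝ => Real.exp (-(x - μ) / σ)) Set.univ := by
      intro x _ y _ hxy
      have h := Real.exp_injective hxy
      rw [div_left_inj' hσ.ne'] at h
      linarith
    have hcv := integral_image_eq_integral_abs_deriv_smul MeasurableSet.univ hder hinj
      (fun t : ℝ => (μ - σ * Real.log t) * Real.exp (-t))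
    rw [him, setIntegral_univ] at hcv
    have hL : (∫ x : ℝ, x * ((1 / σ) * Real.exp (-(x - μ) / σ) *
        Real.exp (-Real.exp (-(x - μ) / σ)))) =
        ∫ t in Set.Ioi (0:ℝ), (μ - σ * Real.log t) * Real.exp (-t) := by
      rw [hcv]
      congr 1
      ext x
      have habs : |Real.exp (-(x - μ) / σ) * (-1 / σ)| = Real.exp (-(x - μ) / σ) * (1 / σ) := by
        rw [abs_mul, abs_of_pos (Real.exp_pos _), neg_div σ 1, abs_neg,
          abs_of_pos (one_div_pos.mpr hσ)]
      have hx : μ - σ * (-(x - μ) / σ) = x := by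
        field_simp
        ring
      rw [habs, Real.log_exp, smul_eq_mul, hx]
      ring
    have he : IntegrableOn (fun t : ℝ => Real.exp (-t)) (Set.Ioi 0) := integrableOn_exp_neg_Ioi 0
    have hsplit : ∫ t in Set.Ioi (0:ℝ), (μ - σ * Real.log t) * Real.exp (-t) =
        ∫ t in Set.Ioi (0:ℝ), (μ * Real.exp (-t) - σ * (Real.log t * Real.exp (-t))) := by
      congr 1
      ext t
      ring
    rw [hL, hsplit, integral_sub (he.const_mul μ) (integrable_log_mul_exp_neg.const_mul σ),
      integral_const_mul, integral_const_mul, integral_log_mul_exp_neg, integral_exp_neg_Ioi_zero]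
    ring
  · have := mul_pos hσ euler_pos
    intro h
    linarith
end
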